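/- Let T = wT_φ on C(K) with φ a homeomorphism of K into itself and φ(K) ≠ K. Set L = ⋂_{n≥0} φⁿ(K) and M = K \ Int_K(L). Then the spectrum of T satisfies σ(T) = σ(T, C(M)) ∪ σ(T, C(L)), where T acts on C(L) and C(M) via the same formula. -/

import Mathlib

open Filter Topology

/-!
Write `T_S` for `T` acting on `C(S)`, and `W_n = w · (w ∘ φ) ⋯ (w ∘ φⁿ⁻¹)`, so that
`Tⁿ f = W_n · (f ∘ φⁿ)`. If `c ∉ σ(T)`, then `c - T` is bounded below by some `1 / C`. A point
`x ∉ L` lies on the orbit of some `y ∉ φ(K)`, and applying the lower bound to `∑ cᴺ⁻¹⁻ⁱ Tⁱ g`, where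
`g` is a bump at a single point of that orbit, yields `|W_n(x)| ≤ C |c|ⁿ⁺¹` (for `c = 0` there is no
such `x`, because `φ` is surjective when `T` is injective). The resolvent set is open, so the same
holds with `c` replaced by `t c` for some `t < 1`; hence, for some `n`, `|W_n| ≤ b < |c|ⁿ` on `M`,
the closure of `K \ L`. Therefore `σ(T_S) ⊆ σ(T)` for every closed invariant `S ⊆ M`, and likewise
`σ(T_S) ⊆ σ(T_M)`. Taking `S = M ∩ L`, a Mayer–Vietoris argument for the cover `K = M ∪ L` finishes
the proof.
-/

open Set

section Core

variable {X : Type*} {φ : X → X}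

/-- The set `⋂ φⁿ(X)` of points having preimages under all iterates of `φ`. -/
def iterateCore (φ : X → X) : Set X :=
  ⋂ n : ℕ, range φ^[n]

theorem mapsTo_iterateCore (φ : X → X) : MapsTo φ (iterateCore φ) (iterateCore φ) := by
  refine fun x hx => mem_iInter.2 fun n => ?_
  obtain ⟨y, rfl⟩ := mem_iInter.1 hx n
  exact ⟨φ y, (Function.Commute.iterate_self φ n y).symm ▸ rfl⟩

theorem mapsTo_compl_iterateCore (hφ : Function.Injective φ) :
    MapsTo φ (iterateCore φ)ᶜ (iterateCore φ)ᶜ := by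
  refine fun x hx hφx => hx (mem_iInter.2 fun n => ?_)
  obtain ⟨y, hy⟩ := mem_iInter.1 hφx (n + 1)
  exact ⟨y, hφ (by rw [← Function.iterate_succ_apply' φ, hy])⟩

theorem iterateCore_eq_univ (hφ : Function.Surjective φ) : iterateCore φ = univ :=
  iInter_eq_univ.2 fun n => (hφ.iterate n).range_eq

theorem exists_iterate_eq_of_notMem_iterateCore {x : X} (hx : x ∉ iterateCore φ) :
    ∃ y ∉ range φ, ∃ m, φ^[m] y = x := by
  by_contra! h
  refine hx (mem_iInter.2 fun n => ?_)
  induction n with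
  | zero => exact ⟨x, rfl⟩
  | succ n ih =>
    obtain ⟨y, rfl⟩ := ih
    obtain ⟨z, rfl⟩ : y ∈ range φ := not_not.1 fun hy => h y hy n rfl
    exact ⟨z, Function.iterate_succ_apply φ n z⟩

theorem iterate_notMem_range_iterate (hφ : Function.Injective φ) {y : X} (hy : y ∉ range φ)
    {i k : ℕ} (hik : i < k) : φ^[i] y ∉ range φ^[k] := by
  obtain ⟨d, rfl⟩ := Nat.exists_eq_add_of_lt hik
  rintro ⟨z, hz⟩
  refine hy ⟨φ^[d] z, hφ.iterate i ?_⟩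
  rw [← hz, add_assoc, Function.iterate_add_apply, Function.iterate_succ_apply']

theorem iterate_ne_of_notMem_range (hφ : Function.Injective φ) {y : X} (hy : y ∉ range φ)
    {i j : ℕ} (hij : i < j) : φ^[i] y ≠ φ^[j] y :=
  fun h => iterate_notMem_range_iterate hφ hy hij ⟨y, h.symm⟩

theorem coe_mem_iterateCore {A : Set X} (hA : MapsTo φ A A) {x : A}
    (hx : x ∈ iterateCore (hA.restrict φ A A)) : (x : X) ∈ iterateCore φ := by
  refine mem_iInter.2 fun n => ?_
  obtain ⟨y, rfl⟩ := mem_iInter.1 hx n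
  exact ⟨y, (hA.coe_iterate_restrict y n).symm⟩

variable [TopologicalSpace X]

theorem mapsTo_compl_interior_iterateCore (hφ : Continuous φ) (hφi : Function.Injective φ) :
    MapsTo φ (interior (iterateCore φ))ᶜ (interior (iterateCore φ))ᶜ := by
  rw [← closure_compl]
  exact (mapsTo_compl_iterateCore hφi).closure hφ

theorem isClosed_iterateCore [CompactSpace X] [T2Space X] (hφ : Continuous φ) :
    IsClosed (iterateCore φ) :=
  isClosed_iInter fun n => (isCompact_range (hφ.iterate n)).isClosed

end Core

section OrbitWeight

variable {X : Type*}

/-- The product `w(x) w(φ x) ⋯ w(φⁿ⁻¹ x)` of the weight along an orbit segment. -/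
def orbitWeight {R : Type*} [CommMonoid R] (φ : X → X) (w : X → R) (n : ℕ) (x : X) : R :=
  ∏ i ∈ Finset.range n, w (φ^[i] x)

theorem orbitWeight_restrict {R : Type*} [CommMonoid R] {φ : X → X} {S : Set X}
    (hS : MapsTo φ S S) (w : X → R) (n : ℕ) (x : S) :
    orbitWeight (hS.restrict φ S S) (w ∘ (↑)) n x = orbitWeight φ w n x :=
  Finset.prod_congr rfl fun i _ => by rw [hS.iterate_restrict]; rfl

variable {𝕜 : Type*} [NormedField 𝕜] {φ : X → X} {w : X → 𝕜} {r : ℝ} {S S' : Set X}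

/-- Some `n`-step product of the weight along orbits is bounded on `S` by a constant less than
`rⁿ`; this makes a weighted composition operator over `S` have spectral radius less than `r`. With a
uniform constant, rather than a pointwise strict inequality, the condition passes to closures. -/
def OrbitWeightDecayOn (φ : X → X) (w : X → 𝕜) (r : ℝ) (S : Set X) : Prop :=
  ∃ n : ℕ, ∃ b ∈ Ico 0 (r ^ n), ∀ x ∈ S, ‖orbitWeight φ w n x‖ ≤ b

theorem OrbitWeightDecayOn.mono (h : OrbitWeightDecayOn φ w r S) (hS : S' ⊆ S) :
    OrbitWeightDecayOn φ w r S' :=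
  let ⟨n, b, hb, hle⟩ := h
  ⟨n, b, hb, fun x hx => hle x (hS hx)⟩

theorem OrbitWeightDecayOn.closure [TopologicalSpace X] (h : OrbitWeightDecayOn φ w r S)
    (hφ : Continuous φ) (hw : Continuous w) : OrbitWeightDecayOn φ w r (closure S) := by
  obtain ⟨n, b, hb, hle⟩ := h
  have hcont : Continuous (orbitWeight φ w n) :=
    continuous_finsetProd _ fun i _ => hw.comp (hφ.iterate i)
  exact ⟨n, b, hb, closure_minimal hle (isClosed_le hcont.norm continuous_const)⟩

end OrbitWeight

section Operator

variable {X R : Type*} [TopologicalSpace X] [T2Space X] [TopologicalSpace R]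

theorem continuous_continuousMap_const_mul [Mul R] [ContinuousMul R] (w : C(X, R)) :
    Continuous fun f : C(X, R) => w * f := by
  refine continuous_iff_continuousAt.2 fun f =>
    (ContinuousMap.tendsto_compactOpen_iff_forall _ _).2 fun K hK => ?_
  have := isCompact_iff_compactSpace.1 hK
  exact ((ContinuousMap.continuous_restrict K).const_mul (w.restrict K)).tendsto f

variable [CommSemiring R] [IsTopologicalSemiring R]

/-- The weighted composition operator `f ↦ w · (f ∘ φ)` on `C(X, R)`. -/
def weightedComp (w : C(X, R)) (φ : C(X, X)) : C(X, R) →L[R] C(X, R) where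
  toFun f := w * f.comp φ
  map_add' f g := by ext; simp [mul_add]
  map_smul' c f := by ext; simp
  cont := (continuous_continuousMap_const_mul w).comp (ContinuousMap.continuous_precomp φ)

/-- The operator `f ↦ w · (f ∘ φ)` on `C(S, R)`, for a `φ`-invariant subset `S` of `X`. -/
def weightedCompOn (w : C(X, R)) (φ : C(X, X)) {S : Set X} (hS : MapsTo φ S S) :
    C(S, R) →L[R] C(S, R) :=
  weightedComp (w.restrict S) ⟨hS.restrict φ S S, φ.continuous.restrict hS⟩

variable {w : C(X, R)} {φ : C(X, X)}

@[simp]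
theorem weightedComp_apply (f : C(X, R)) (x : X) : weightedComp w φ f x = w x * f (φ x) :=
  rfl

theorem eq_weightedComp {T : C(X, R) →L[R] C(X, R)} (hT : ∀ f x, T f x = w x * f (φ x)) :
    T = weightedComp w φ := by
  ext f x
  exact hT f x

theorem eq_weightedCompOn {S : Set X} (hS : MapsTo φ S S) {T : C(S, R) →L[R] C(S, R)}
    (hT : ∀ f x, T f x = w x.1 * f ⟨φ x.1, hS x.2⟩) : T = weightedCompOn w φ hS :=
  eq_weightedComp hT

theorem weightedComp_pow_apply (n : ℕ) (f : C(X, R)) (x : X) :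
    (weightedComp w φ ^ n) f x = orbitWeight φ w n x * f (φ^[n] x) := by
  induction n generalizing f with
  | zero => simp [orbitWeight]
  | succ n ih =>
    rw [pow_succ, mul_apply_eq_comp, ih, weightedComp_apply, orbitWeight, orbitWeight,
      Finset.prod_range_succ, Function.iterate_succ_apply', mul_assoc]

theorem sum_smul_weightedComp_pow_apply (c : R) {n N : ℕ} (hn : n < N) {g : C(X, R)} {x : X}
    (hg : ∀ i < N, i ≠ n → g (φ^[i] x) = 0) :
    (∑ i ∈ Finset.range N, c ^ (N - 1 - i) • (weightedComp w φ ^ i) g) x =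
      c ^ (N - 1 - n) * (orbitWeight φ w n x * g (φ^[n] x)) := by
  rw [ContinuousMap.sum_apply, Finset.sum_eq_single_of_mem n (Finset.mem_range.2 hn)]
  · rw [ContinuousMap.smul_apply, weightedComp_pow_apply, smul_eq_mul]
  · intro i hi hin
    rw [ContinuousMap.smul_apply, weightedComp_pow_apply, hg i (Finset.mem_range.1 hi) hin,
      mul_zero, smul_zero]

end Operator

section Spectrum

theorem notMem_spectrum_iff_bijective {𝕜 E : Type*} [NontriviallyNormedField 𝕜]
    [NormedAddCommGroup E] [NormedSpace 𝕜 E] [CompleteSpace E] {T : E →L[𝕜] E} {c : 𝕜} :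
    c ∉ spectrum 𝕜 T ↔ Function.Bijective fun f => c • f - T f := by
  rw [spectrum.notMem_iff, ContinuousLinearMap.isUnit_iff_bijective]
  rfl

theorem notMem_spectrum_of_norm_pow_lt {𝕜 E : Type*} [NontriviallyNormedField 𝕜]
    [NormedAddCommGroup E] [NormedSpace 𝕜 E] [CompleteSpace E] {T : E →L[𝕜] E} {c : 𝕜} {n : ℕ}
    (h : ‖T ^ n‖ < ‖c‖ ^ n) : c ∉ spectrum 𝕜 T := by
  intro hc
  refine h.not_ge ?_
  calc ‖c‖ ^ n = ‖c ^ n‖ := (norm_pow c n).symm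
    _ ≤ ‖T ^ n‖ * ‖(1 : E →L[𝕜] E)‖ :=
      spectrum.norm_le_norm_mul_of_mem (spectrum.pow_mem_pow T n hc)
    _ ≤ ‖T ^ n‖ := mul_le_of_le_one_right (norm_nonneg _) ContinuousLinearMap.norm_id_le

theorem exists_norm_le_mul_norm_smul_sub {𝕜 E : Type*} [NontriviallyNormedField 𝕜]
    [NormedAddCommGroup E] [NormedSpace 𝕜 E] {T : E →L[𝕜] E} {c : 𝕜} (hc : c ∉ spectrum 𝕜 T) :
    ∃ C, 0 ≤ C ∧ ∀ f, ‖f‖ ≤ C * ‖c • f - T f‖ := by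
  obtain ⟨R, hR⟩ := (spectrum.notMem_iff.1 hc).exists_left_inv
  refine ⟨‖R‖, norm_nonneg R, fun f => ?_⟩
  have hRf : R (c • f - T f) = f := DFunLike.congr_fun hR f
  simpa only [hRf] using R.le_opNorm (c • f - T f)

theorem exists_mul_notMem_spectrum {𝕜 E : Type*} [RCLike 𝕜] [NormedAddCommGroup E]
    [NormedSpace 𝕜 E] [CompleteSpace E] {T : E →L[𝕜] E} {c : 𝕜} (hc : c ∉ spectrum 𝕜 T) :
    ∃ t : ℝ, 0 < t ∧ t < 1 ∧ (t : 𝕜) * c ∉ spectrum 𝕜 T := by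
  have hcont : Continuous fun t : ℝ => (t : 𝕜) * c := by fun_prop
  have hev : ∀ᶠ t : ℝ in 𝓝 1, (t : 𝕜) * c ∉ spectrum 𝕜 T :=
    hcont.continuousAt.eventually_mem ((spectrum.isClosed T).isOpen_compl.mem_nhds (by simpa))
  obtain ⟨t, ht, ht0, ht1⟩ := ((hev.filter_mono nhdsWithin_le_nhds).and
    (Ioo_mem_nhdsLT (zero_lt_one (α := ℝ)))).exists (f := 𝓝[<] (1 : ℝ))
  exact ⟨t, ht0, ht1, ht⟩

theorem smul_sub_geom_sum_apply {R M : Type*} [CommRing R] [AddCommGroup M] [Module R M]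
    [TopologicalSpace M] [IsTopologicalAddGroup M] [ContinuousConstSMul R M]
    (T : M →L[R] M) (c : R) (N : ℕ) (g : M) :
    c • (∑ i ∈ Finset.range N, c ^ (N - 1 - i) • (T ^ i) g) -
      T (∑ i ∈ Finset.range N, c ^ (N - 1 - i) • (T ^ i) g) = c ^ N • g - (T ^ N) g := by
  induction N with
  | zero => simp
  | succ N ih =>
    have hsum : ∑ i ∈ Finset.range (N + 1), c ^ (N - i) • (T ^ i) g =
        c • ∑ i ∈ Finset.range N, c ^ (N - 1 - i) • (T ^ i) g + (T ^ N) g := by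
      rw [Finset.sum_range_succ, Nat.sub_self, pow_zero, one_smul, Finset.smul_sum]
      refine congrArg (· + (T ^ N) g) (Finset.sum_congr rfl fun i hi => ?_)
      have hiN : N - i = N - 1 - i + 1 := by have := Finset.mem_range.1 hi; omega
      rw [hiN, pow_succ', mul_smul]
    rw [Nat.add_sub_cancel, hsum, smul_add, map_add, map_smul, add_sub_add_comm, ← smul_sub, ih,
      smul_sub, smul_smul, ← pow_succ', pow_succ' T, mul_apply_eq_comp]
    abel

end Spectrum

section Decay

theorem norm_weightedComp_pow_le {X 𝕜 : Type*} [TopologicalSpace X] [CompactSpace X] [T2Space X]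
    [NontriviallyNormedField 𝕜] {w : C(X, 𝕜)} {φ : C(X, X)} {n : ℕ} {b : ℝ} (hb : 0 ≤ b)
    (h : ∀ x, ‖orbitWeight φ w n x‖ ≤ b) : ‖weightedComp w φ ^ n‖ ≤ b := by
  refine ContinuousLinearMap.opNorm_le_bound _ hb fun f => ?_
  refine (ContinuousMap.norm_le _ (by positivity)).2 fun x => ?_
  rw [weightedComp_pow_apply, norm_mul]
  exact mul_le_mul (h x) (f.norm_coe_le_norm _) (norm_nonneg _) hb

theorem notMem_spectrum_weightedCompOn {X 𝕜 : Type*} [TopologicalSpace X] [T2Space X]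
    [NontriviallyNormedField 𝕜] [CompleteSpace 𝕜] {w : C(X, 𝕜)} {φ : C(X, X)} {c : 𝕜} {S : Set X}
    [CompactSpace S] (hS : MapsTo φ S S) (h : OrbitWeightDecayOn φ w ‖c‖ S) :
    c ∉ spectrum 𝕜 (weightedCompOn w φ hS) := by
  obtain ⟨n, b, ⟨hb, hbc⟩, hle⟩ := h
  refine notMem_spectrum_of_norm_pow_lt ((norm_weightedComp_pow_le hb fun x => ?_).trans_lt hbc)
  exact (orbitWeight_restrict hS w n x).symm ▸ hle x x.2

variable {X 𝕜 : Type*} [TopologicalSpace X] [CompactSpace X] [T2Space X] [RCLike 𝕜]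

theorem exists_continuousMap_eq_one_eqOn_zero {s : Set X} (hs : IsClosed s) {x : X} (hx : x ∉ s) :
    ∃ g : C(X, 𝕜), ‖g‖ ≤ 1 ∧ g x = 1 ∧ EqOn g 0 s := by
  obtain ⟨u, hu0, hu1, hu⟩ := exists_continuous_zero_one_of_isClosed hs
    (isClosed_singleton (x := x)) (disjoint_singleton_right.2 hx)
  refine ⟨⟨fun y => (u y : 𝕜), by fun_prop⟩, ?_, ?_, fun y hy => ?_⟩
  · refine (ContinuousMap.norm_le _ zero_le_one).2 fun y => ?_
    simpa [abs_of_nonneg (hu y).1] using (hu y).2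
  · simpa using hu1 (mem_singleton x)
  · simpa using hu0 hy

theorem exists_continuousMap_eq_one_of_notMem_range {φ : X → X} (hφ : Continuous φ)
    (hφi : Function.Injective φ) {y : X} (hy : y ∉ range φ) (j : ℕ) :
    ∃ g : C(X, 𝕜), ‖g‖ ≤ 1 ∧ g (φ^[j] y) = 1 ∧ (∀ i ≠ j, g (φ^[i] y) = 0) ∧
      ∀ x, g (φ^[j + 1] x) = 0 := by
  have hclosed : IsClosed ((fun i => φ^[i] y) '' Iio j ∪ range φ^[j + 1]) :=
    ((finite_Iio j).image _).isClosed.union (isCompact_range (hφ.iterate _)).isClosed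
  obtain ⟨g, hg, hg1, hg0⟩ := exists_continuousMap_eq_one_eqOn_zero (𝕜 := 𝕜) hclosed
    (x := φ^[j] y) (by
      rintro (⟨i, hi, hij⟩ | hj)
      · exact iterate_ne_of_notMem_range hφi hy hi hij
      · exact iterate_notMem_range_iterate hφi hy j.lt_succ_self hj)
  refine ⟨g, hg, hg1, fun i hi => ?_, fun x => hg0 (.inr ⟨x, rfl⟩)⟩
  rcases hi.lt_or_gt with hij | hji
  · exact hg0 (.inl ⟨i, hij, rfl⟩)
  · refine hg0 (.inr ⟨φ^[i - (j + 1)] y, ?_⟩)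
    rw [← Function.iterate_add_apply, Nat.add_sub_cancel' hji]

variable {w : C(X, 𝕜)} {φ : C(X, X)} {c : 𝕜}

theorem norm_orbitWeight_le_of_norm_le (hφ : Function.Injective φ) (hc : c ≠ 0) {C : ℝ}
    (hC : ∀ f, ‖f‖ ≤ C * ‖c • f - weightedComp w φ f‖) (hC0 : 0 ≤ C) {x : X}
    (hx : x ∉ iterateCore φ) (n : ℕ) : ‖orbitWeight φ w n x‖ ≤ C * ‖c‖ ^ (n + 1) := by
  obtain ⟨y, hy, m, rfl⟩ := exists_iterate_eq_of_notMem_iterateCore hx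
  set T := weightedComp w φ
  set N := n + m + 1
  obtain ⟨g, hg, hg1, hg_orbit, hg_range⟩ :=
    exists_continuousMap_eq_one_of_notMem_range (𝕜 := 𝕜) φ.continuous hφ hy (n + m)
  set f := ∑ i ∈ Finset.range N, c ^ (N - 1 - i) • (T ^ i) g
  have hTg : (T ^ N) g = 0 := by
    ext z
    rw [weightedComp_pow_apply, hg_range, mul_zero, ContinuousMap.zero_apply]
  have hf : c • f - T f = c ^ N • g := by
    rw [smul_sub_geom_sum_apply, hTg, sub_zero]
  have hg_ne (i : ℕ) (hin : i ≠ n) : g (φ^[i] (φ^[m] y)) = 0 := by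
    rw [← Function.iterate_add_apply]
    exact hg_orbit _ (by simpa)
  have hfx : f (φ^[m] y) = c ^ m * orbitWeight φ w n (φ^[m] y) := by
    rw [sum_smul_weightedComp_pow_apply c (by omega) fun i _ hin => hg_ne i hin,
      ← Function.iterate_add_apply, hg1, mul_one, show N - 1 - n = m by omega]
  refine le_of_mul_le_mul_left ?_ (pow_pos (norm_pos_iff.2 hc) m)
  calc ‖c‖ ^ m * ‖orbitWeight φ w n (φ^[m] y)‖ = ‖f (φ^[m] y)‖ := by rw [hfx, norm_mul, norm_pow]
    _ ≤ ‖f‖ := f.norm_coe_le_norm _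
    _ ≤ C * (‖c‖ ^ N * ‖g‖) := by simpa only [hf, norm_smul, norm_pow] using hC f
    _ ≤ C * ‖c‖ ^ N := by
      gcongr
      exact mul_le_of_le_one_right (by positivity) hg
    _ = ‖c‖ ^ m * (C * ‖c‖ ^ (n + 1)) := by ring

theorem surjective_of_zero_notMem_spectrum (h : 0 ∉ spectrum 𝕜 (weightedComp w φ)) :
    Function.Surjective φ := by
  intro x
  by_contra hx
  obtain ⟨g, -, hgx, hg0⟩ := exists_continuousMap_eq_one_eqOn_zero (𝕜 := 𝕜)
    (isCompact_range φ.continuous).isClosed hx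
  have hg : g = 0 := by
    apply (notMem_spectrum_iff_bijective.1 h).1
    ext y
    simp [hg0 (mem_range_self y)]
  simp [hg] at hgx

theorem orbitWeightDecayOn_compl_iterateCore (hφ : Function.Injective φ)
    (hc : c ∉ spectrum 𝕜 (weightedComp w φ)) :
    OrbitWeightDecayOn φ w ‖c‖ (iterateCore φ)ᶜ := by
  rcases eq_or_ne c 0 with rfl | hc0
  · exact ⟨0, 0, by simp, by simp [iterateCore_eq_univ (surjective_of_zero_notMem_spectrum hc)]⟩
  obtain ⟨t, ht0, ht1, ht⟩ := exists_mul_notMem_spectrum hc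
  have htc : (t : 𝕜) * c ≠ 0 := mul_ne_zero (by exact_mod_cast ht0.ne') hc0
  have hnorm : ‖(t : 𝕜) * c‖ = t * ‖c‖ := by rw [norm_mul, RCLike.norm_of_nonneg ht0.le]
  obtain ⟨C, hC0, hC⟩ := exists_norm_le_mul_norm_smul_sub ht
  have hlim : Tendsto (fun n : ℕ => C * ‖c‖ * t * t ^ n) atTop (𝓝 0) := by
    simpa using (tendsto_pow_atTop_nhds_zero_of_lt_one ht0.le ht1).const_mul (C * ‖c‖ * t)
  obtain ⟨n, hn⟩ := (hlim.eventually_lt_const zero_lt_one).exists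
  refine ⟨n, C * (t * ‖c‖) ^ (n + 1), ⟨by positivity, ?_⟩, fun x hx => ?_⟩
  · calc C * (t * ‖c‖) ^ (n + 1) = C * ‖c‖ * t * t ^ n * ‖c‖ ^ n := by ring
      _ < ‖c‖ ^ n := mul_lt_of_lt_one_left (by positivity) hn
  · rw [← hnorm]
    exact norm_orbitWeight_le_of_norm_le hφ htc hC hC0 hx n

theorem orbitWeightDecayOn_compl_iterateCore_of_subset (hφ : Function.Injective φ) {A : Set X}
    (hA : IsClosed A) (hφA : MapsTo φ A A) (hcore : (iterateCore φ)ᶜ ⊆ A)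
    (hc : c ∉ spectrum 𝕜 (weightedCompOn w φ hφA)) :
    OrbitWeightDecayOn φ w ‖c‖ (iterateCore φ)ᶜ := by
  have := isCompact_iff_compactSpace.1 hA.isCompact
  obtain ⟨n, b, hb, hle⟩ :=
    orbitWeightDecayOn_compl_iterateCore (hφA.restrict_inj.2 hφ.injOn) hc
  refine ⟨n, b, hb, fun x hx => ?_⟩
  rw [← orbitWeight_restrict hφA w n ⟨x, hcore hx⟩]
  exact hle _ fun hxA => hx (coe_mem_iterateCore hφA hxA)

theorem spectrum_weightedCompOn_subset_spectrum_weightedComp (hφ : Function.Injective φ)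
    {S : Set X} (hS : IsClosed S) (hφS : MapsTo φ S S) (hcore : S ⊆ closure (iterateCore φ)ᶜ) :
    spectrum 𝕜 (weightedCompOn w φ hφS) ⊆ spectrum 𝕜 (weightedComp w φ) := by
  have := isCompact_iff_compactSpace.1 hS.isCompact
  refine compl_subset_compl.1 fun c hc => notMem_spectrum_weightedCompOn hφS ?_
  exact ((orbitWeightDecayOn_compl_iterateCore hφ hc).closure φ.continuous w.continuous).mono hcore

theorem spectrum_weightedCompOn_subset_spectrum_weightedCompOn (hφ : Function.Injective φ)
    {S A : Set X} (hS : IsClosed S) (hφS : MapsTo φ S S) (hSc : S ⊆ closure (iterateCore φ)ᶜ)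
    (hA : IsClosed A) (hφA : MapsTo φ A A) (hAc : (iterateCore φ)ᶜ ⊆ A) :
    spectrum 𝕜 (weightedCompOn w φ hφS) ⊆ spectrum 𝕜 (weightedCompOn w φ hφA) := by
  have := isCompact_iff_compactSpace.1 hS.isCompact
  refine compl_subset_compl.1 fun c hc => notMem_spectrum_weightedCompOn hφS ?_
  exact ((orbitWeightDecayOn_compl_iterateCore_of_subset hφ hA hφA hAc hc).closure
    φ.continuous w.continuous).mono hSc

end Decay

section Cover

variable {X Y : Type*} [TopologicalSpace X] [TopologicalSpace Y] {A B : Set X}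

theorem exists_continuousMap_restrict_eq_of_cover (hA : IsClosed A) (hB : IsClosed B)
    (hAB : A ∪ B = univ) (f : C(A, Y)) (g : C(B, Y))
    (hfg : ∀ x (ha : x ∈ A) (hb : x ∈ B), f ⟨x, ha⟩ = g ⟨x, hb⟩) :
    ∃ F : C(X, Y), F.restrict A = f ∧ F.restrict B = g := by
  classical
  have hB' (x : X) (hx : x ∉ A) : x ∈ B := (hAB.symm ▸ mem_univ x : x ∈ A ∪ B).resolve_left hx
  let F (x : X) : Y := if h : x ∈ A then f ⟨x, h⟩ else g ⟨x, hB' x h⟩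
  have hFA : A.domRestrict F = f := by
    ext a
    simp [F]
  have hFB : B.domRestrict F = g := by
    ext b
    by_cases h : (b : X) ∈ A
    · simp [F, h, hfg b h b.2]
    · simp [F, h]
  have hF : Continuous F := by
    rw [← continuousOn_univ, ← hAB]
    refine ContinuousOn.union_of_isClosed ?_ ?_ hA hB
    · exact continuousOn_iff_continuous_domRestrict.2 (hFA ▸ f.continuous)
    · exact continuousOn_iff_continuous_domRestrict.2 (hFB ▸ g.continuous)
  exact ⟨⟨F, hF⟩, DFunLike.coe_injective hFA, DFunLike.coe_injective hFB⟩

theorem continuousMap_ext_of_cover (hAB : A ∪ B = univ) {f g : C(X, Y)}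
    (hA : f.restrict A = g.restrict A) (hB : f.restrict B = g.restrict B) : f = g := by
  ext x
  rcases (hAB.symm ▸ mem_univ x : x ∈ A ∪ B) with hx | hx
  · exact DFunLike.congr_fun hA ⟨x, hx⟩
  · exact DFunLike.congr_fun hB ⟨x, hx⟩

end Cover

section MayerVietoris

variable {X 𝕜 : Type*} [TopologicalSpace X] [T2Space X] {A B : Set X}

theorem smul_sub_weightedComp_restrict [CommRing 𝕜] [TopologicalSpace 𝕜] [IsTopologicalRing 𝕜]
    {w : C(X, 𝕜)} {φ : C(X, X)} (hA : MapsTo φ A A) (c : 𝕜) (f : C(X, 𝕜)) :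
    (c • f - weightedComp w φ f).restrict A =
      c • f.restrict A - weightedCompOn w φ hA (f.restrict A) :=
  rfl

variable [CompactSpace X]

theorem spectrum_weightedComp_subset_of_cover [NontriviallyNormedField 𝕜] [CompleteSpace 𝕜]
    {w : C(X, 𝕜)} {φ : C(X, X)} (hA : IsClosed A) (hB : IsClosed B) (hAB : A ∪ B = univ)
    (hφA : MapsTo φ A A) (hφB : MapsTo φ B B) :
    spectrum 𝕜 (weightedComp w φ) ⊆ spectrum 𝕜 (weightedCompOn w φ hφA) ∪
      spectrum 𝕜 (weightedCompOn w φ hφB) ∪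
      spectrum 𝕜 (weightedCompOn w φ (hφA.inter_inter hφB)) := by
  have := isCompact_iff_compactSpace.1 hA.isCompact
  have := isCompact_iff_compactSpace.1 hB.isCompact
  have := isCompact_iff_compactSpace.1 (hA.inter hB).isCompact
  refine compl_subset_compl.1 fun c hc => ?_
  simp only [mem_compl_iff, mem_union, not_or, notMem_spectrum_iff_bijective] at hc ⊢
  obtain ⟨⟨⟨hA_inj, hA_surj⟩, hB_inj, hB_surj⟩, hAB_inj, -⟩ := hc
  refine ⟨fun f₁ f₂ hf => ?_, fun g => ?_⟩
  · apply continuousMap_ext_of_cover hAB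
    · exact hA_inj (congrArg (ContinuousMap.restrict A) hf)
    · exact hB_inj (congrArg (ContinuousMap.restrict B) hf)
  · obtain ⟨fA, hfA⟩ := hA_surj (g.restrict A)
    obtain ⟨fB, hfB⟩ := hB_surj (g.restrict B)
    have hagree : fA.comp (.inclusion inter_subset_left) =
        fB.comp (.inclusion inter_subset_right) := by
      apply hAB_inj
      exact (congrArg (ContinuousMap.comp · (.inclusion inter_subset_left)) hfA).trans
        (congrArg (ContinuousMap.comp · (.inclusion inter_subset_right)) hfB).symm
    obtain ⟨f, rfl, rfl⟩ := exists_continuousMap_restrict_eq_of_cover hA hB hAB fA fB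
      fun x hxA hxB => DFunLike.congr_fun hagree ⟨x, hxA, hxB⟩
    exact ⟨f, continuousMap_ext_of_cover hAB hfA hfB⟩

theorem spectrum_weightedCompOn_subset_of_cover [RCLike 𝕜] {w : C(X, 𝕜)} {φ : C(X, X)}
    (hA : IsClosed A) (hB : IsClosed B) (hAB : A ∪ B = univ) (hφA : MapsTo φ A A)
    (hφB : MapsTo φ B B) :
    spectrum 𝕜 (weightedCompOn w φ hφB) ⊆ spectrum 𝕜 (weightedComp w φ) ∪
      spectrum 𝕜 (weightedCompOn w φ (hφA.inter_inter hφB)) := by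
  have := isCompact_iff_compactSpace.1 hB.isCompact
  have := isCompact_iff_compactSpace.1 (hA.inter hB).isCompact
  refine compl_subset_compl.1 fun c hc => ?_
  simp only [mem_compl_iff, mem_union, not_or, notMem_spectrum_iff_bijective] at hc ⊢
  obtain ⟨⟨hinj, hsurj⟩, hAB_inj, -⟩ := hc
  refine ⟨fun f₁ f₂ hf => ?_, fun g => ?_⟩
  · have hagree : f₁.comp (.inclusion inter_subset_right) =
        f₂.comp (.inclusion inter_subset_right) :=
      hAB_inj (congrArg (ContinuousMap.comp · (.inclusion inter_subset_right)) hf)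
    obtain ⟨F₁, rfl⟩ := ContinuousMap.exists_restrict_eq hB f₁
    obtain ⟨F₂, hF₂A, rfl⟩ := exists_continuousMap_restrict_eq_of_cover hA hB hAB (F₁.restrict A) f₂
      fun x hxA hxB => DFunLike.congr_fun hagree ⟨x, hxA, hxB⟩
    have hF : F₁ = F₂ := hinj <| continuousMap_ext_of_cover hAB
      (by simp only [smul_sub_weightedComp_restrict hφA, hF₂A]) hf
    rw [hF]
  · obtain ⟨G, rfl⟩ := ContinuousMap.exists_restrict_eq hB g
    obtain ⟨F, rfl⟩ := hsurj G
    exact ⟨F.restrict B, rfl⟩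

end MayerVietoris

theorem stmt2_general {K 𝕜 : Type*} [TopologicalSpace K] [CompactSpace K] [T2Space K] [RCLike 𝕜]
    (φ : C(K, K)) (hφ : Function.Injective φ) (w : C(K, 𝕜)) :
    spectrum 𝕜 (weightedComp w φ) =
      spectrum 𝕜 (weightedCompOn w φ (mapsTo_compl_interior_iterateCore φ.continuous hφ)) ∪
        spectrum 𝕜 (weightedCompOn w φ (mapsTo_iterateCore φ)) := by
  set L := iterateCore φ
  set M := (interior L)ᶜ with hM
  have hφM : MapsTo φ M M := mapsTo_compl_interior_iterateCore φ.continuous hφ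
  have hφL : MapsTo φ L L := mapsTo_iterateCore φ
  have hLc : IsClosed L := isClosed_iterateCore φ.continuous
  have hMc : IsClosed M := isOpen_interior.isClosed_compl
  have hM_closure : M = closure Lᶜ := closure_compl.symm
  have hcover : M ∪ L = univ := by
    rw [hM, union_comm, ← compl_subset_iff_union]
    exact compl_subset_compl.2 interior_subset
  have hML_T : spectrum 𝕜 (weightedCompOn w φ (hφM.inter_inter hφL)) ⊆
      spectrum 𝕜 (weightedComp w φ) :=
    spectrum_weightedCompOn_subset_spectrum_weightedComp hφ (hMc.inter hLc) _
      (inter_subset_left.trans hM_closure.subset)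
  have hML_M : spectrum 𝕜 (weightedCompOn w φ (hφM.inter_inter hφL)) ⊆
      spectrum 𝕜 (weightedCompOn w φ hφM) :=
    spectrum_weightedCompOn_subset_spectrum_weightedCompOn hφ (hMc.inter hLc) _
      (inter_subset_left.trans hM_closure.subset) hMc hφM (compl_subset_compl.2 interior_subset)
  have hM_T : spectrum 𝕜 (weightedCompOn w φ hφM) ⊆ spectrum 𝕜 (weightedComp w φ) :=
    spectrum_weightedCompOn_subset_spectrum_weightedComp hφ hMc hφM hM_closure.subset
  apply Subset.antisymm
  · exact (spectrum_weightedComp_subset_of_cover hMc hLc hcover hφM hφL).trans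
      (union_subset Subset.rfl (hML_M.trans subset_union_left))
  · exact union_subset hM_T
      ((spectrum_weightedCompOn_subset_of_cover hMc hLc hcover hφM hφL).trans
        (union_subset Subset.rfl hML_T))

/-- `σ(T) = σ(T, C(M)) ∪ σ(T, C(L))` where `L = ⋂ φⁿ(K)` and
`M = K \ Int_K L`. -/
theorem stmt2 (K : Type*) [TopologicalSpace K] [CompactSpace K] [T2Space K]
    (φ : K → K) (hφc : Continuous φ) (hφi : Function.Injective φ)
    (hns : Set.range φ ≠ Set.univ)
    (w : C(K, ℂ)) (T : C(K, ℂ) →L[ℂ] C(K, ℂ))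
    (hT : ∀ (f : C(K, ℂ)) (k : K), T f k = w k * f (φ k))
    (L M : Set K) [CompactSpace L] [CompactSpace M]
    (hL : L = ⋂ n : ℕ, φ^[n] '' Set.univ)
    (hM : M = (interior L)ᶜ)
    (hφL : ∀ k ∈ L, φ k ∈ L) (hφM : ∀ k ∈ M, φ k ∈ M)
    (TL : C(L, ℂ) →L[ℂ] C(L, ℂ))
    (hTL : ∀ (f : C(L, ℂ)) (k : L), TL f k = w k.1 * f ⟨φ k.1, hφL k.1 k.2⟩)
    (TM : C(M, ℂ) →L[ℂ] C(M, ℂ))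
    (hTM : ∀ (f : C(M, ℂ)) (k : M), TM f k = w k.1 * f ⟨φ k.1, hφM k.1 k.2⟩) :
    spectrum ℂ T = spectrum ℂ TM ∪ spectrum ℂ TL := by
  simp only [Set.image_univ] at hL
  subst hL hM
  rw [eq_weightedComp (φ := ⟨φ, hφc⟩) hT, eq_weightedCompOn (φ := ⟨φ, hφc⟩) hφL hTL,
    eq_weightedCompOn (φ := ⟨φ, hφc⟩) hφM hTM]
  exact stmt2_general ⟨φ, hφc⟩ hφi w
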